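/- arXiv:2404.14204 — 5 statements merged into one kernel-verified Lean document; each statement's English description precedes it below -/
import Mathlib

section
/- (Proposition 4: 1/2-approximation of the successive greedy placement) Let Q : Fin M → ℝ be storage capacities. Suppose the placement family Ŝ : Fin M → Finset I satisfies, for every m : Fin M: (i) g(Ŝ m) ≤ Q m, and (ii) for every finite A ⊆ I with g(A) ≤ Q m, Uhat m (Function.update Ŝ m A) ≤ Uhat m Ŝ (i.e., Ŝ m maximizes the m-th per-server value over all storage-feasible choices, given the choices already made on earlier servers). Then for every placement family S* : Fin M → Finset I with g(S* m) ≤ Q m for all m, one has U(graph S*) ≤ 2 · U(graph Ŝ). -/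
/-!
Say that a family hits a request `(k, i)` if some server caching `i` can serve it. Assigning each hit
request to the first server hitting it shows that the per-server values of the greedy family add up
to its cache-hit value (`sum_Uhat_le_U` is the inequality needed). A request hit by another family
`R` is either hit by the greedy family `S`, or it is missed by every server of `S`, and then it
counts in the `m`-th per-server value once `S m` is replaced by `R m`, for any server `m` at which
`R` hits it (`U_le_add_sum_Uhat_update`). By greedy optimality those replaced values are at most the
original ones, so their sum is at most the cache-hit value of `S`, which gives the factor `2`.
-/

open scoped Classical

/-- Cache-hit value of a placement set `S ⊆ M × I`. -/
noncomputable def U {M K I : Type*} [Fintype K] [Fintype I]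
    (p : K → I → ℝ) (Tlat : M → K → I → ℝ) (Tbar : K → I → ℝ)
    (S : Finset (M × I)) : ℝ :=
  ∑ k : K, ∑ i : I,
    p k i * (if ∃ m, (m, i) ∈ S ∧ Tlat m k i ≤ Tbar k i then 1 else 0)

/-- The graph of a placement family: the set of pairs `(m, i)` with `i ∈ S m`. -/
noncomputable def graphOf {M : ℕ} {I : Type*} [Fintype I]
    (S : Fin M → Finset I) : Finset (Fin M × I) :=
  Finset.univ.filter (fun mi => mi.2 ∈ S mi.1)

/-- Successive per-server value. -/
noncomputable def Uhat {M : ℕ} {K I : Type*} [Fintype K] [Fintype I]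
    (p : K → I → ℝ) (Tlat : Fin M → K → I → ℝ) (Tbar : K → I → ℝ)
    (m : Fin M) (S : Fin M → Finset I) : ℝ :=
  ∑ k : K, ∑ i : I,
    p k i * (if (i ∈ S m ∧ Tlat m k i ≤ Tbar k i ∧
      ∀ m' < m, ¬(i ∈ S m' ∧ Tlat m' k i ≤ Tbar k i)) then 1 else 0)

/-- Parameter-sharing storage usage. -/
noncomputable def g {I J : Type*} [Fintype J]
    (D : J → ℝ) (blocks : I → Finset J) (S : Finset I) : ℝ :=
  ∑ j : J, D j * (if ∃ i ∈ S, j ∈ blocks i then 1 else 0)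

theorem sum_Uhat_le_U {M : ℕ} {K I : Type*} [Fintype K] [Fintype I]
    (p : K → I → ℝ) (hp : ∀ k i, 0 ≤ p k i)
    (Tlat : Fin M → K → I → ℝ) (Tbar : K → I → ℝ) (S : Fin M → Finset I) :
    ∑ m, Uhat p Tlat Tbar m S ≤ U p Tlat Tbar (graphOf S) := by
  unfold Uhat U
  rw [Finset.sum_comm]
  refine Finset.sum_le_sum fun k _ => ?_
  rw [Finset.sum_comm]
  refine Finset.sum_le_sum fun i _ => ?_
  rw [← Finset.mul_sum]
  refine mul_le_mul_of_nonneg_left ?_ (hp k i)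
  by_cases h : ∃ m, i ∈ S m ∧ Tlat m k i ≤ Tbar k i
  · rw [if_pos (by simpa [graphOf] using h), Finset.sum_boole]
    -- At most one server is the first to hit `(k, i)`.
    have hcard : (Finset.univ.filter fun m : Fin M => i ∈ S m ∧ Tlat m k i ≤ Tbar k i ∧
        ∀ m' < m, ¬(i ∈ S m' ∧ Tlat m' k i ≤ Tbar k i)).card ≤ 1 := by
      refine Finset.card_le_one.2 fun a ha b hb => ?_
      simp only [Finset.mem_filter, Finset.mem_univ, true_and] at ha hb
      rcases lt_trichotomy a b with hab | hab | hab
      · exact absurd ⟨ha.1, ha.2.1⟩ (hb.2.2 a hab)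
      · exact hab
      · exact absurd ⟨hb.1, hb.2.1⟩ (ha.2.2 b hab)
    exact_mod_cast hcard
  · rw [if_neg (by simpa [graphOf] using h)]
    refine (Finset.sum_eq_zero fun m _ => if_neg ?_).le
    exact fun hm => h ⟨m, hm.1, hm.2.1⟩

theorem U_le_add_sum_Uhat_update {M : ℕ} {K I : Type*} [Fintype K] [Fintype I]
    (p : K → I → ℝ) (hp : ∀ k i, 0 ≤ p k i)
    (Tlat : Fin M → K → I → ℝ) (Tbar : K → I → ℝ) (S R : Fin M → Finset I) :
    U p Tlat Tbar (graphOf R) ≤ U p Tlat Tbar (graphOf S) +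
      ∑ m, Uhat p Tlat Tbar m (Function.update S m (R m)) := by
  unfold Uhat U
  rw [Finset.sum_comm (s := (Finset.univ : Finset (Fin M))), ← Finset.sum_add_distrib]
  refine Finset.sum_le_sum fun k _ => ?_
  rw [Finset.sum_comm (s := (Finset.univ : Finset (Fin M))), ← Finset.sum_add_distrib]
  refine Finset.sum_le_sum fun i _ => ?_
  rw [← Finset.mul_sum, ← mul_add]
  refine mul_le_mul_of_nonneg_left ?_ (hp k i)
  have hnonneg : ∀ m ∈ (Finset.univ : Finset (Fin M)),
      (0 : ℝ) ≤ if (i ∈ Function.update S m (R m) m ∧ Tlat m k i ≤ Tbar k i ∧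
        ∀ m' < m, ¬(i ∈ Function.update S m (R m) m' ∧ Tlat m' k i ≤ Tbar k i))
        then 1 else 0 := fun m _ => by split_ifs <;> norm_num
  by_cases hS : ∃ m, (m, i) ∈ graphOf S ∧ Tlat m k i ≤ Tbar k i
  · rw [if_pos hS]
    have := Finset.sum_nonneg hnonneg
    split_ifs <;> linarith
  · rw [if_neg hS, zero_add]
    by_cases hR : ∃ m, (m, i) ∈ graphOf R ∧ Tlat m k i ≤ Tbar k i
    · rw [if_pos hR]
      obtain ⟨m, hm, hT⟩ := hR
      refine le_trans ?_ (Finset.single_le_sum hnonneg (Finset.mem_univ m))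
      rw [if_pos]
      refine ⟨by simpa [graphOf] using hm, hT, fun n hlt hn => hS ⟨n, ?_, hn.2⟩⟩
      -- Replacing the `m`-th set leaves the earlier servers `n < m` unchanged.
      have := hn.1
      rw [Function.update_of_ne hlt.ne] at this
      simpa [graphOf] using this
    · rw [if_neg hR]
      exact Finset.sum_nonneg hnonneg

/-- Proposition 4: if each `Ŝ m` exactly maximizes the `m`-th successive
per-server value among storage-feasible choices (given earlier choices),
then the resulting placement is a `1/2`-approximation. -/
theorem successive_greedy_half_approx {M : ℕ} {K I J : Type*}
    [Fintype K] [Fintype I] [Fintype J]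
    (p : K → I → ℝ) (hp : ∀ k i, 0 ≤ p k i)
    (Tlat : Fin M → K → I → ℝ) (Tbar : K → I → ℝ)
    (D : J → ℝ) (hD : ∀ j, 0 ≤ D j) (blocks : I → Finset J)
    (Q : Fin M → ℝ)
    (Shat : Fin M → Finset I)
    (hfeas : ∀ m : Fin M, g D blocks (Shat m) ≤ Q m)
    (hopt : ∀ m : Fin M, ∀ A : Finset I, g D blocks A ≤ Q m →
      Uhat p Tlat Tbar m (Function.update Shat m A) ≤ Uhat p Tlat Tbar m Shat)
    (Sstar : Fin M → Finset I)
    (hstar : ∀ m : Fin M, g D blocks (Sstar m) ≤ Q m) :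
    U p Tlat Tbar (graphOf Sstar) ≤ 2 * U p Tlat Tbar (graphOf Shat) := by
  have h₁ := U_le_add_sum_Uhat_update p hp Tlat Tbar Shat Sstar
  have h₂ := sum_Uhat_le_U p hp Tlat Tbar Shat
  have h₃ : ∑ m, Uhat p Tlat Tbar m (Function.update Shat m (Sstar m)) ≤
      ∑ m, Uhat p Tlat Tbar m Shat :=
    Finset.sum_le_sum fun m _ => hopt m (Sstar m) (hstar m)
  linarith
end

section
/- (Core rounding lemma of Proposition 5) Let I be a finite type, u : I → ℝ, c ∈ ℝ with 0 < c and c ≤ u i for every i : I, and ε ∈ ℝ with 0 < ε ≤ 1. For all finite sets A, B ⊆ I: if Σ_{i ∈ A} ⌊u i / (ε·c)⌋ ≥ Σ_{i ∈ B} ⌊u i / (ε·c)⌋ (a comparison of sums of integer floors), then Σ_{i ∈ A} u i ≥ (1 − ε) · Σ_{i ∈ B} u i. -/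
/-!
With step `d = ε * c`, every value satisfies `(1 - ε) * u i ≤ d * ⌊u i / d⌋ ≤ u i`: the right
inequality is rounding down, and the left holds because the rounding loss is at most
`d ≤ ε * u i`. Summing the left one over `B` and the right one over `A`, the comparison of the
rounded sums links the two.
-/

/-- Core rounding lemma of Proposition 5: if a set `A` beats a set `B` on
the sums of the rounded values `⌊u i / (ε·c)⌋`, then `A` achieves at least a
`(1 − ε)` fraction of `B`'s true value. -/
theorem rounding_lemma {I : Type*} (u : I → ℝ) (c : ℝ)
    (hc : 0 < c) (hcu : ∀ i, c ≤ u i)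
    (ε : ℝ) (hε0 : 0 < ε) (hε1 : ε ≤ 1)
    (A B : Finset I)
    (h : ∑ i ∈ B, ⌊u i / (ε * c)⌋ ≤ ∑ i ∈ A, ⌊u i / (ε * c)⌋) :
    (1 - ε) * ∑ i ∈ B, u i ≤ ∑ i ∈ A, u i := by
  have hd : 0 < ε * c := mul_pos hε0 hc
  -- Rounding down to a multiple of `ε * c` loses at most `ε * c ≤ ε * u i`.
  have lower : ∀ i, (1 - ε) * u i ≤ ε * c * (⌊u i / (ε * c)⌋ : ℝ) := fun i => by
    have h1 := (div_lt_iff₀ hd).1 (Int.lt_floor_add_one (u i / (ε * c)))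
    have h2 := mul_le_mul_of_nonneg_left (hcu i) hε0.le
    linarith
  have upper : ∀ i, ε * c * (⌊u i / (ε * c)⌋ : ℝ) ≤ u i := fun i => by
    have h1 := (le_div_iff₀ hd).1 (Int.floor_le (u i / (ε * c)))
    linarith
  have hR : ∑ i ∈ B, (⌊u i / (ε * c)⌋ : ℝ) ≤ ∑ i ∈ A, (⌊u i / (ε * c)⌋ : ℝ) := by
    exact_mod_cast h
  calc (1 - ε) * ∑ i ∈ B, u i = ∑ i ∈ B, (1 - ε) * u i := Finset.mul_sum _ _ _
    _ ≤ ∑ i ∈ B, ε * c * (⌊u i / (ε * c)⌋ : ℝ) := Finset.sum_le_sum fun i _ => lower i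
    _ = ε * c * ∑ i ∈ B, (⌊u i / (ε * c)⌋ : ℝ) := (Finset.mul_sum _ _ _).symm
    _ ≤ ε * c * ∑ i ∈ A, (⌊u i / (ε * c)⌋ : ℝ) := mul_le_mul_of_nonneg_left hR hd.le
    _ = ∑ i ∈ A, ε * c * (⌊u i / (ε * c)⌋ : ℝ) := Finset.mul_sum _ _ _
    _ ≤ ∑ i ∈ A, u i := Finset.sum_le_sum fun i _ => upper i
end

section
/- (Proposition 5 / Corollary 2: (1−ε)-optimality of maximizing the rounded objective under the storage constraint) Fix a server m : Fin M, prior placements Ŝ : Fin M → Finset I, and define the per-model value u i = Σ_{k : K} p k i * (if (H m k i ∧ ∀ m' < m, ¬(i ∈ Ŝ m' ∧ H m' k i)) then 1 else 0). Assume u i > 0 for every i : I and let c = min_{i : I} u i. Let ε ∈ ℝ with 0 < ε ≤ 1 and Q ∈ ℝ. Suppose A ⊆ I satisfies g(A) ≤ Q and Σ_{i ∈ A} ⌊u i/(ε·c)⌋ ≥ Σ_{i ∈ S} ⌊u i/(ε·c)⌋ for every finite S ⊆ I with g(S) ≤ Q, and suppose B ⊆ I satisfies g(B) ≤ Q. Then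 Σ_{i ∈ A} u i ≥ (1 − ε) · Σ_{i ∈ B} u i; in particular A achieves at least (1 − ε) times the optimal value of the single-server sub-problem P2.1_m. -/
/-! Rounding `u i` down to a multiple of `ε * c` loses less than `ε * c ≤ ε * u i`, since `c` is
the least value. Hence `(1 - ε) * u i ≤ ε * c * ⌊u i / (ε * c)⌋ ≤ u i` for every model `i`; summing
the left inequality over `B` and the right one over `A`, the optimality of `A` for the rounded
objective links the two. -/

open scoped Classical

/-- Per-model value on server `m` given the prior placements `Shat` on the
earlier servers: the total request weight for model `i` that server `m` can
serve within latency and that no earlier server already serves. -/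
noncomputable def uval {M : ℕ} {K I : Type*} [Fintype K]
    (p : K → I → ℝ) (Tlat : Fin M → K → I → ℝ) (Tbar : K → I → ℝ)
    (Shat : Fin M → Finset I) (m : Fin M) (i : I) : ℝ :=
  ∑ k : K,
    p k i * (if (Tlat m k i ≤ Tbar k i ∧
      ∀ m' < m, ¬(i ∈ Shat m' ∧ Tlat m' k i ≤ Tbar k i)) then 1 else 0)

/-- Proposition 5 / Corollary 2: a storage-feasible set `A` maximizing the
rounded objective `∑ ⌊u i/(ε·c)⌋` achieves at least `(1 − ε)` times the true
value of any storage-feasible set `B` for the single-server sub-problem. -/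
theorem rounding_DP_eps_optimal {M : ℕ} {K I J : Type*}
    [Fintype K] [Fintype I] [Fintype J] [Nonempty I]
    (p : K → I → ℝ) (hp : ∀ k i, 0 ≤ p k i)
    (Tlat : Fin M → K → I → ℝ) (Tbar : K → I → ℝ)
    (D : J → ℝ) (hD : ∀ j, 0 ≤ D j) (blocks : I → Finset J)
    (Shat : Fin M → Finset I) (m : Fin M)
    (hupos : ∀ i : I, 0 < uval p Tlat Tbar Shat m i)
    (ε Q : ℝ) (hε0 : 0 < ε) (hε1 : ε ≤ 1)
    (c : ℝ)
    (hc : c = Finset.univ.inf' Finset.univ_nonempty (uval p Tlat Tbar Shat m))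
    (A : Finset I) (hA : g D blocks A ≤ Q)
    (hopt : ∀ S : Finset I, g D blocks S ≤ Q →
      ∑ i ∈ S, ⌊uval p Tlat Tbar Shat m i / (ε * c)⌋ ≤
        ∑ i ∈ A, ⌊uval p Tlat Tbar Shat m i / (ε * c)⌋)
    (B : Finset I) (hB : g D blocks B ≤ Q) :
    (1 - ε) * ∑ i ∈ B, uval p Tlat Tbar Shat m i ≤
      ∑ i ∈ A, uval p Tlat Tbar Shat m i := by
  generalize uval p Tlat Tbar Shat m = u at *
  have hc0 : 0 < c := by
    rw [hc, Finset.lt_inf'_iff]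
    exact fun i _ => hupos i
  have hcu : ∀ i, c ≤ u i := fun i => hc ▸ Finset.inf'_le u (Finset.mem_univ i)
  have hεc : 0 < ε * c := mul_pos hε0 hc0
  have hlow : ∀ i, (1 - ε) * u i ≤ (ε * c) * (⌊u i / (ε * c)⌋ : ℝ) := fun i => by
    have h1 : u i < ((⌊u i / (ε * c)⌋ : ℝ) + 1) * (ε * c) :=
      (div_lt_iff₀ hεc).1 (Int.lt_floor_add_one _)
    have h2 : ε * c ≤ ε * u i := mul_le_mul_of_nonneg_left (hcu i) hε0.le
    linarith
  have hup : ∀ i, (ε * c) * (⌊u i / (ε * c)⌋ : ℝ) ≤ u i := fun i => by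
    rw [mul_comm]
    exact (le_div_iff₀ hεc).1 (Int.floor_le _)
  have hBA : ∑ i ∈ B, (⌊u i / (ε * c)⌋ : ℝ) ≤ ∑ i ∈ A, (⌊u i / (ε * c)⌋ : ℝ) := by
    exact_mod_cast hopt B hB
  calc (1 - ε) * ∑ i ∈ B, u i = ∑ i ∈ B, (1 - ε) * u i := Finset.mul_sum _ _ _
    _ ≤ ∑ i ∈ B, (ε * c) * (⌊u i / (ε * c)⌋ : ℝ) := Finset.sum_le_sum fun i _ => hlow i
    _ = (ε * c) * ∑ i ∈ B, (⌊u i / (ε * c)⌋ : ℝ) := (Finset.mul_sum _ _ _).symm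
    _ ≤ (ε * c) * ∑ i ∈ A, (⌊u i / (ε * c)⌋ : ℝ) := mul_le_mul_of_nonneg_left hBA hεc.le
    _ = ∑ i ∈ A, (ε * c) * (⌊u i / (ε * c)⌋ : ℝ) := Finset.mul_sum _ _ _
    _ ≤ ∑ i ∈ A, u i := Finset.sum_le_sum fun i _ => hup i
end

section
/- (Core bound of Theorem 4: 1/Γ guarantee of the greedy placement) Let Q : M → ℝ be storage capacities. Suppose the finite placement set X̂ ⊆ M × I contains a pair (m₀, i₀) such that for every pair (m, i) with g({i}) ≤ Q m one has U({(m, i)}) ≤ U({(m₀, i₀)}) (i.e., X̂ contains a best storage-feasible single placement). Then for every finite X* ⊆ M × I such that for each m the set {i | (m,i) ∈ X*} has storage usage g at most Q m, one has U(X*) ≤ |X*| · U(X̂), where |X*| is the cardinality of X*. Since |X*| ≤ Γ, the maximum cardinality of a storage-feasible placement set, this yields U(X̂) ≥ U(X*)/Γ. -/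
/-!
The cache-hit value `U` is monotone and subadditive over single placements, because a request
hit by `S` is hit by at least one pair of `S` and the weights are nonnegative. Storage usage `g`
is monotone, so each pair of a feasible `Xstar` is feasible by itself and is worth at most
`U {(m₀, i₀)} ≤ U Xhat`. Summing over the pairs of `Xstar` gives the factor `Xstar.card`.
-/

open scoped Classical

theorem U_mono {M K I : Type*} [Fintype K] [Fintype I]
    (p : K → I → ℝ) (hp : ∀ k i, 0 ≤ p k i)
    (Tlat : M → K → I → ℝ) (Tbar : K → I → ℝ) {S S' : Finset (M × I)} (h : S ⊆ S') :
    U p Tlat Tbar S ≤ U p Tlat Tbar S' := by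
  unfold U
  refine Finset.sum_le_sum fun k _ => Finset.sum_le_sum fun i _ =>
    mul_le_mul_of_nonneg_left ?_ (hp k i)
  by_cases hS : ∃ m, (m, i) ∈ S ∧ Tlat m k i ≤ Tbar k i
  · obtain ⟨m, hm, hT⟩ := hS
    rw [if_pos ⟨m, hm, hT⟩, if_pos ⟨m, h hm, hT⟩]
  · rw [if_neg hS]
    split_ifs <;> norm_num

theorem g_mono {I J : Type*} [Fintype J]
    (D : J → ℝ) (hD : ∀ j, 0 ≤ D j) (blocks : I → Finset J) {S S' : Finset I} (h : S ⊆ S') :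
    g D blocks S ≤ g D blocks S' := by
  unfold g
  refine Finset.sum_le_sum fun j _ => mul_le_mul_of_nonneg_left ?_ (hD j)
  by_cases hS : ∃ i ∈ S, j ∈ blocks i
  · obtain ⟨i, hi, hj⟩ := hS
    rw [if_pos ⟨i, hi, hj⟩, if_pos ⟨i, h hi, hj⟩]
  · rw [if_neg hS]
    split_ifs <;> norm_num

theorem U_le_sum_singleton {M K I : Type*} [Fintype K] [Fintype I]
    (p : K → I → ℝ) (hp : ∀ k i, 0 ≤ p k i)
    (Tlat : M → K → I → ℝ) (Tbar : K → I → ℝ) (S : Finset (M × I)) :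
    U p Tlat Tbar S ≤ ∑ x ∈ S, U p Tlat Tbar {x} := by
  unfold U
  conv_rhs => rw [Finset.sum_comm]
  refine Finset.sum_le_sum fun k _ => ?_
  conv_rhs => rw [Finset.sum_comm]
  refine Finset.sum_le_sum fun i _ => ?_
  rw [← Finset.mul_sum]
  refine mul_le_mul_of_nonneg_left ?_ (hp k i)
  have hnonneg : ∀ x ∈ S, (0 : ℝ) ≤
      if ∃ m, (m, i) ∈ ({x} : Finset (M × I)) ∧ Tlat m k i ≤ Tbar k i then 1 else 0 := by
    intro x _
    split_ifs <;> norm_num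
  by_cases hS : ∃ m, (m, i) ∈ S ∧ Tlat m k i ≤ Tbar k i
  · obtain ⟨m, hm, hT⟩ := hS
    rw [if_pos ⟨m, hm, hT⟩]
    -- The summand of the pair `(m, i)` that serves the request already equals `1`.
    refine le_trans (le_of_eq ?_) (Finset.single_le_sum hnonneg hm)
    rw [if_pos ⟨m, Finset.mem_singleton_self _, hT⟩]
  · rw [if_neg hS]
    exact Finset.sum_nonneg hnonneg

/-- Core bound of Theorem 4: if the placement `X̂` contains a best
storage-feasible single placement `(m₀, i₀)`, then every storage-feasible
placement `X*` satisfies `U(X*) ≤ |X*| · U(X̂)`. -/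
theorem greedy_gamma_bound {M K I J : Type*}
    [Fintype K] [Fintype I] [Fintype J]
    (p : K → I → ℝ) (hp : ∀ k i, 0 ≤ p k i)
    (Tlat : M → K → I → ℝ) (Tbar : K → I → ℝ)
    (D : J → ℝ) (hD : ∀ j, 0 ≤ D j) (blocks : I → Finset J)
    (Q : M → ℝ)
    (Xhat : Finset (M × I)) (m₀ : M) (i₀ : I)
    (hmem : (m₀, i₀) ∈ Xhat)
    (hbest : ∀ (m : M) (i : I), g D blocks {i} ≤ Q m →
      U p Tlat Tbar {(m, i)} ≤ U p Tlat Tbar {(m₀, i₀)})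
    (Xstar : Finset (M × I))
    (hstar : ∀ m : M,
      g D blocks (Finset.univ.filter (fun i => (m, i) ∈ Xstar)) ≤ Q m) :
    U p Tlat Tbar Xstar ≤ (Xstar.card : ℝ) * U p Tlat Tbar Xhat := by
  have hpair : ∀ x ∈ Xstar, U p Tlat Tbar {x} ≤ U p Tlat Tbar Xhat := by
    rintro ⟨m, i⟩ hx
    have hfeas : g D blocks {i} ≤ Q m :=
      (g_mono D hD blocks (by simpa using hx)).trans (hstar m)
    exact (hbest m i hfeas).trans
      (U_mono p hp Tlat Tbar (Finset.singleton_subset_iff.mpr hmem))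
  calc U p Tlat Tbar Xstar ≤ ∑ x ∈ Xstar, U p Tlat Tbar {x} :=
        U_le_sum_singleton p hp Tlat Tbar Xstar
    _ ≤ Xstar.card • U p Tlat Tbar Xhat := Finset.sum_le_card_nsmul _ _ _ hpair
    _ = (Xstar.card : ℝ) * U p Tlat Tbar Xhat := nsmul_eq_mul _ _
end

section
/- (Key inequality in the proof of Proposition 4) For all placement families Ŝ, S* : Fin M → Finset I, U(graph S*) ≤ U(graph Ŝ) + Σ_{m : Fin M} Uhat m (Function.update Ŝ m (S* m)). That is, the cache-hit value of any placement S* is at most the cache-hit value of Ŝ plus the sum over servers m of the per-server value obtained by substituting S*'s choice on server m while keeping Ŝ's choices on the earlier servers. -/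
/-!
Both sides are combinations of the weights `p k i ≥ 0`, so it suffices to compare the coefficients
for each request `(k, i)`. Only a request served by `S*` matters. If `Ŝ` also serves it, the first
term on the right already contributes 1. Otherwise no earlier server of `Ŝ` blocks the request, so
any server `m` at which `S*` serves it contributes 1 through its own per-server value.
-/

open scoped Classical

/-- Key inequality in the proof of Proposition 4: the value of any placement
`S*` is at most the value of `Ŝ` plus the sum over servers of the per-server
values obtained by substituting `S*`'s choice on that server. -/
theorem key_exchange_inequality {M : ℕ} {K I : Type*} [Fintype K] [Fintype I]
    (p : K → I → ℝ) (hp : ∀ k i, 0 ≤ p k i)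
    (Tlat : Fin M → K → I → ℝ) (Tbar : K → I → ℝ)
    (Shat Sstar : Fin M → Finset I) :
    U p Tlat Tbar (graphOf Sstar) ≤
      U p Tlat Tbar (graphOf Shat) +
        ∑ m : Fin M, Uhat p Tlat Tbar m (Function.update Shat m (Sstar m)) := by
  unfold U Uhat
  have hswap : ∀ f : Fin M → K → I → ℝ,
      ∑ m, ∑ k, ∑ i, f m k i = ∑ k, ∑ i, ∑ m, f m k i := by
    intro f
    rw [Finset.sum_comm]
    exact Finset.sum_congr rfl fun k _ => Finset.sum_comm
  rw [hswap]
  simp only [← Finset.sum_add_distrib, ← Finset.mul_sum, ← mul_add]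
  refine Finset.sum_le_sum fun k _ => Finset.sum_le_sum fun i _ =>
    mul_le_mul_of_nonneg_left ?_ (hp k i)
  have hterm : ∀ m ∈ (Finset.univ : Finset (Fin M)), (0 : ℝ) ≤
      if (i ∈ Function.update Shat m (Sstar m) m ∧ Tlat m k i ≤ Tbar k i ∧
        ∀ m' < m, ¬(i ∈ Function.update Shat m (Sstar m) m' ∧ Tlat m' k i ≤ Tbar k i))
      then 1 else 0 := by
    intro m _
    split_ifs <;> norm_num
  have hsum := Finset.sum_nonneg hterm
  by_cases hstar : ∃ m, (m, i) ∈ graphOf Sstar ∧ Tlat m k i ≤ Tbar k i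
  · by_cases hhat : ∃ m, (m, i) ∈ graphOf Shat ∧ Tlat m k i ≤ Tbar k i
    · rw [if_pos hstar, if_pos hhat]
      linarith
    · obtain ⟨m, hm, hserve⟩ := id hstar
      rw [if_pos hstar, if_neg hhat, zero_add]
      refine le_trans (le_of_eq ?_) (Finset.single_le_sum hterm (Finset.mem_univ m))
      rw [if_pos]
      refine ⟨by simpa [graphOf] using hm, hserve, fun m' hlt hm' => hhat ⟨m', ?_, hm'.2⟩⟩
      simpa [graphOf, Function.update_of_ne hlt.ne] using hm'.1
  · rw [if_neg hstar]
    refine add_nonneg ?_ hsum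
    split_ifs <;> norm_num
end
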